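/- arXiv:1802.00605 — 2 statements merged into one kernel-verified Lean document; each statement's English description precedes it below -/
import Mathlib

section
/- Let L_{n;c}^{(α)} = L_n^{(α)} + c·L_{n−1}^{(α)} with L_m^{(α)} the Laguerre polynomial. For c ≠ 0 with n + α + cn ≠ 0: disc(L_{n;c}^{(α)}) = 1/(n+α+cn) · ∏_{k=1}^n k^{k−2n+3} · ∏_{k=1}^{n−1} (k+α)^{k−1} · (−c)^n · L_{n;c}^{(α)}((nc² + (2n+α)c + n + α)/c). -/
open Polynomial

/-- The resultant: `Res f g = lc(f)^(deg g) * ∏_{α root of f} g(α)`. -/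
noncomputable def Res (f g : Polynomial ℂ) : ℂ :=
  f.leadingCoeff ^ g.natDegree * (f.roots.map (fun a => g.eval a)).prod

/-- The discriminant of a polynomial. -/
noncomputable def disc (f : Polynomial ℂ) : ℂ :=
  (-1) ^ (f.natDegree * (f.natDegree - 1) / 2) / f.leadingCoeff * Res f (derivative f)

/-- The generalized Laguerre polynomial
`L_m^{(α)}(x) = ∑_{k=0}^m binom(m+α, m−k) (−x)^k / k!`, where
`binom(m+α, m−k) = (∏_{j=k+1}^m (α+j)) / (m−k)!`. -/
noncomputable def L (α : ℂ) (m : ℕ) : Polynomial ℂ :=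
  ∑ k ∈ Finset.range (m + 1),
    C ((∏ j ∈ Finset.Icc (k + 1) m, (α + j)) / ((m - k).factorial * k.factorial) *
      (-1) ^ k) * X ^ k

/-!
Let `f = L_n^{(α)} + c L_{n-1}^{(α)}`, `d = n + α + cn` and `p_k = L_k^{(α+1)}`. The contiguity
relations give
`n f = -d p_{n-2} + (d - X) p_{n-1}` and `d f' = c n f + c (X - x₀) p_{n-1}`,
where `x₀` is the evaluation point in the formula. The second identity reduces `Res(f, f')` to
`f(x₀) Res(f, p_{n-1})`, the first reduces that to `Res(p_{n-1}, p_{n-2})`, and the latter is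
computed by running the Euclidean algorithm along the three-term recurrence.
-/

lemma coeff_L_add (α : ℂ) (k d : ℕ) :
    (L α (k + d)).coeff k =
      (ascPochhammer ℂ d).eval (α + k + 1) / (d.factorial * k.factorial) * (-1) ^ k := by
  have prod_eq : ∏ j ∈ Finset.Icc (k + 1) (k + d), (α + j) =
      (ascPochhammer ℂ d).eval (α + k + 1) := by
    induction d with
    | zero => simp
    | succ d ih =>
      rw [← add_assoc, Finset.prod_Icc_succ_top (by lia), ih, ascPochhammer_succ_eval]
      push_cast
      ring
  simp only [L, finsetSum_coeff, coeff_C_mul, coeff_X_pow, mul_ite, mul_one, mul_zero]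
  rw [Finset.sum_ite_eq, if_pos (by simp), prod_eq, Nat.add_sub_cancel_left]

lemma coeff_L_eq_zero (α : ℂ) {m k : ℕ} (hk : m < k) : (L α m).coeff k = 0 := by
  simp only [L, finsetSum_coeff, coeff_C_mul, coeff_X_pow, mul_ite, mul_one, mul_zero]
  rw [Finset.sum_ite_eq, if_neg (by simpa using hk)]

lemma coeff_L_self (α : ℂ) (m : ℕ) : (L α m).coeff m = (-1) ^ m / m.factorial := by
  simpa [div_eq_inv_mul] using coeff_L_add α m 0

lemma natDegree_L (α : ℂ) (m : ℕ) : (L α m).natDegree = m := by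
  refine natDegree_eq_of_le_of_coeff_ne_zero
    (natDegree_le_iff_coeff_eq_zero.mpr fun k hk ↦ coeff_L_eq_zero α hk) ?_
  rw [coeff_L_self]
  exact div_ne_zero (by simp) (mod_cast m.factorial_ne_zero)

lemma ascPochhammer_succ_eval_left {S : Type*} [CommSemiring S] (d : ℕ) (x : S) :
    (ascPochhammer S (d + 1)).eval x = x * (ascPochhammer S d).eval (x + 1) := by
  simp [ascPochhammer_succ_left]

lemma derivative_L_succ (α : ℂ) (m : ℕ) : derivative (L α (m + 1)) = -L (α + 1) m := by
  ext k
  rw [coeff_derivative, coeff_neg]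
  obtain hk | hk := lt_or_ge m k
  · simp [coeff_L_eq_zero _ hk, coeff_L_eq_zero α (Nat.succ_lt_succ hk)]
  obtain ⟨d, rfl⟩ := Nat.exists_eq_add_of_le hk
  rw [add_right_comm, coeff_L_add, coeff_L_add, Nat.factorial_succ, pow_succ]
  push_cast
  rw [show α + 1 + (k : ℂ) + 1 = α + (k + 1) + 1 by ring]
  field_simp

lemma L_succ_eq_sub (α : ℂ) (m : ℕ) : L α (m + 1) = L (α + 1) (m + 1) - L (α + 1) m := by
  ext k
  rw [coeff_sub]
  obtain hk | rfl | hk := lt_trichotomy k (m + 1)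
  · obtain ⟨d, rfl⟩ := Nat.exists_eq_add_of_le (Nat.lt_succ_iff.mp hk)
    rw [add_assoc, coeff_L_add, coeff_L_add, coeff_L_add,
      ascPochhammer_succ_eval_left d (α + k + 1), ascPochhammer_succ_eval, Nat.factorial_succ,
      show α + 1 + (k : ℂ) + 1 = α + k + 1 + 1 by ring]
    push_cast
    field_simp
    ring
  · simp [coeff_L_self, coeff_L_eq_zero]
  · simp [coeff_L_eq_zero _ hk, coeff_L_eq_zero _ (m.lt_succ_self.trans hk)]

lemma sub_mul_coeff_L_succ (α : ℂ) (m k : ℕ) :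
    (m + 1 - k : ℂ) * (L α (m + 1)).coeff k = (m + 1 + α) * (L α m).coeff k := by
  obtain hk | rfl | hk := lt_trichotomy k (m + 1)
  · obtain ⟨d, rfl⟩ := Nat.exists_eq_add_of_le (Nat.lt_succ_iff.mp hk)
    rw [add_assoc, coeff_L_add, coeff_L_add, ascPochhammer_succ_eval, Nat.factorial_succ]
    push_cast
    field_simp
    ring
  · simp [coeff_L_eq_zero]
  · simp [coeff_L_eq_zero _ hk, coeff_L_eq_zero _ (m.lt_succ_self.trans hk)]

lemma X_mul_L_add_one (α : ℂ) (m : ℕ) :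
    X * L (α + 1) m = C (m + 1 + α) * L α m - C (m + 1 : ℂ) * L α (m + 1) := by
  rw [← neg_eq_iff_eq_neg.mpr (derivative_L_succ α m)]
  ext k
  have coeff_rel := sub_mul_coeff_L_succ α m k
  rcases k with _ | k
  · simp only [coeff_sub, mul_coeff_zero, coeff_X_zero, coeff_C_zero]
    push_cast at coeff_rel
    linear_combination coeff_rel
  · simp only [coeff_sub, coeff_C_mul, coeff_X_mul, coeff_neg, coeff_derivative]
    push_cast at coeff_rel
    linear_combination coeff_rel

lemma L_three_term (α : ℂ) (m : ℕ) :
    C (m + 2 : ℂ) * L α (m + 2) =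
      C (-(m + 1 + α)) * L α m + L α (m + 1) * (C (2 * m + 3 + α) - X) := by
  have lower := X_mul_L_add_one α m
  have upper := X_mul_L_add_one α (m + 1)
  have connect := L_succ_eq_sub α m
  simp only [Nat.cast_add, Nat.cast_one, map_add, map_neg, map_mul, map_one, map_natCast,
    map_ofNat] at lower upper ⊢
  linear_combination upper - lower + X * connect

lemma resultant_mul_L_add_L_mul (α a : ℂ) (m : ℕ) {l : ℂ[X]} (hl : l.natDegree ≤ 1) :
    (C a * L α m + L α (m + 1) * l).resultant (L α (m + 1)) (m + 2) (m + 1) =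
      a ^ (m + 1) / ((m + 1).factorial : ℂ) ^ 2 *
        (L α (m + 1)).resultant (L α m) (m + 1) m := by
  have even_sign : (-1 : ℂ) ^ (m * (m + 1)) = 1 := (Nat.even_mul_succ_self m).neg_one_pow
  rw [resultant_add_mul_left _ _ _ _ _ (by lia) (natDegree_L α _).le, resultant_C_mul_left,
    resultant_add_left_deg _ _ _ _ _ (natDegree_L α _).le, resultant_comm (L α m), coeff_L_self,
    even_sign, (even_two.mul_left _).neg_one_pow, div_pow, ← pow_mul,
    (even_two.mul_left _).neg_one_pow]
  ring

lemma prod_Icc_zpow_sub_two {K : Type*} [Field K] [CharZero K] (n : ℕ) (e : ℕ → ℤ) :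
    ∏ k ∈ Finset.Icc 1 n, (k : K) ^ (e k - 2) =
      (∏ k ∈ Finset.Icc 1 n, (k : K) ^ e k) / (n.factorial : K) ^ 2 := by
  rw [← Finset.prod_Ico_id_eq_factorial, Finset.Ico_add_one_right_eq_Icc, Nat.cast_prod,
    ← Finset.prod_pow, ← Finset.prod_div_distrib]
  refine Finset.prod_congr rfl fun k hk ↦ ?_
  have k_ne_zero : (k : K) ≠ 0 :=
    mod_cast Nat.one_le_iff_ne_zero.mp (Finset.mem_Icc.mp hk).1
  rw [zpow_sub₀ k_ne_zero, zpow_ofNat]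

lemma resultant_L_succ_L (α : ℂ) (m : ℕ) :
    (L α (m + 1)).resultant (L α m) (m + 1) m =
      (-1) ^ (m + 1).choose 2 * (∏ k ∈ Finset.Icc 1 m, (k + α) ^ k) *
        ∏ k ∈ Finset.Icc 1 (m + 1), (k : ℂ) ^ ((k : ℤ) - 2 * m - 1) := by
  induction m with
  | zero => simp [coeff_L_self]
  | succ m ih =>
    have ne_zero : (m + 2 : ℂ) ≠ 0 := by exact_mod_cast (m + 1).succ_ne_zero
    have step : (m + 2 : ℂ) ^ (m + 1) *
        (L α (m + 2)).resultant (L α (m + 1)) (m + 2) (m + 1) =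
          (-(m + 1 + α)) ^ (m + 1) / ((m + 1).factorial : ℂ) ^ 2 *
            (L α (m + 1)).resultant (L α m) (m + 1) m := by
      rw [← resultant_C_mul_left, L_three_term,
        resultant_mul_L_add_L_mul _ _ _ (by compute_degree)]
    have powers : ∏ k ∈ Finset.Icc 1 (m + 2), (k : ℂ) ^ ((k : ℤ) - 2 * (m + 1 : ℕ) - 1) =
        (∏ k ∈ Finset.Icc 1 (m + 1), (k : ℂ) ^ ((k : ℤ) - 2 * m - 1)) /
          ((m + 1).factorial : ℂ) ^ 2 / (m + 2) ^ (m + 1) := by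
      have exponent_shift (k : ℕ) :
          (k : ℤ) - 2 * (m + 1 : ℕ) - 1 = (k : ℤ) - 2 * m - 1 - 2 := by lia
      have cast_top : ((m + 1 + 1 : ℕ) : ℂ) = m + 2 := by
        push_cast
        ring
      have top_exponent : ((m + 2 : ℕ) : ℤ) - 2 * m - 1 - 2 = -(m + 1 : ℕ) := by lia
      simp only [exponent_shift]
      rw [Finset.prod_Icc_succ_top (by lia), prod_Icc_zpow_sub_two, top_exponent, zpow_neg,
        zpow_natCast, ← div_eq_mul_inv, cast_top]
    apply mul_left_cancel₀ (pow_ne_zero (m + 1) ne_zero)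
    rw [step, ih, powers, Finset.prod_Icc_succ_top (by lia) fun k : ℕ ↦ ((k : ℂ) + α) ^ k,
      Nat.choose_succ_succ' (m + 1), Nat.choose_one_right, neg_pow (m + 1 + α)]
    push_cast
    field_simp
    ring

lemma Res_eq_resultant (f g : ℂ[X]) : Res f g = f.resultant g :=
  (resultant_eq_prod_eval f g _ le_rfl (IsAlgClosed.splits f)).symm

lemma disc_eq_resultant {f : ℂ[X]} (hf : 0 < f.natDegree) :
    disc f = (-1) ^ f.natDegree.choose 2 / f.leadingCoeff ^ 2 *
      f.resultant (derivative f) f.natDegree f.natDegree := by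
  have leadingCoeff_ne_zero : f.leadingCoeff ≠ 0 :=
    leadingCoeff_ne_zero.mpr (ne_zero_of_natDegree_gt hf)
  have natDegree_eq : f.natDegree = (derivative f).natDegree + 1 := by
    rw [natDegree_derivative]
    lia
  have raise_degree : f.resultant (derivative f) f.natDegree f.natDegree =
      f.leadingCoeff * f.resultant (derivative f) := by
    have := resultant_add_right_deg f (derivative f) f.natDegree _ 1 le_rfl
    rwa [← natDegree_eq, pow_one, coeff_natDegree] at this
  rw [disc, Res_eq_resultant, raise_degree, Nat.choose_two_right]
  field_simp

/-- The quasi-Laguerre polynomial `L_{n;c}^{(α)} = L_n^{(α)} + c L_{n-1}^{(α)}`, for `n ≥ 1`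
(truncated subtraction gives the meaningless value `(1 + c) L_0^{(α)}` at `n = 0`). -/
noncomputable def quasiL (α c : ℂ) (n : ℕ) : ℂ[X] :=
  L α n + C c * L α (n - 1)

/-- The point at which `L_{n;c}^{(α)}` is evaluated in the formula for its discriminant, for
`c ≠ 0`: the root of the linear factor relating the derivative of `L_{n;c}^{(α)}` to
`L_{n-1}^{(α+1)}` modulo `L_{n;c}^{(α)}`. -/
noncomputable def discNode (α c : ℂ) (n : ℕ) : ℂ :=
  (n * c ^ 2 + (2 * n + α) * c + n + α) / c

lemma quasiL_succ (α c : ℂ) (n : ℕ) : quasiL α c (n + 1) = L α (n + 1) + C c * L α n := rfl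

lemma natDegree_quasiL (α c : ℂ) (n : ℕ) : (quasiL α c (n + 1)).natDegree = n + 1 := by
  rw [quasiL_succ, natDegree_add_eq_left_of_natDegree_lt, natDegree_L]
  refine (natDegree_C_mul_le _ _).trans_lt ?_
  simp only [natDegree_L, Nat.lt_succ_self]

lemma leadingCoeff_quasiL_sq (α c : ℂ) (n : ℕ) :
    (quasiL α c (n + 1)).leadingCoeff ^ 2 = 1 / ((n + 1).factorial : ℂ) ^ 2 := by
  have coeff_L_pred : (L α n).coeff (n + 1) = 0 := coeff_L_eq_zero α n.lt_succ_self
  rw [leadingCoeff, natDegree_quasiL, quasiL_succ, coeff_add, coeff_C_mul, coeff_L_self,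
    coeff_L_pred, mul_zero, add_zero, div_pow, ← pow_mul,
    (even_two.mul_left _).neg_one_pow]

lemma C_mul_quasiL (α c : ℂ) (m : ℕ) :
    C (m + 2 : ℂ) * quasiL α c (m + 2) = C (-(m + 2 + α + c * (m + 2))) * L (α + 1) m +
      L (α + 1) (m + 1) * (C (m + 2 + α + c * (m + 2)) - X) := by
  have three_term := L_three_term (α + 1) m
  rw [quasiL_succ, L_succ_eq_sub α (m + 1), L_succ_eq_sub α m]
  simp only [map_add, map_neg, map_mul, map_one, map_natCast, map_ofNat] at three_term ⊢
  linear_combination three_term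

lemma C_mul_derivative_quasiL (α : ℂ) {c : ℂ} (hc : c ≠ 0) (m : ℕ) :
    C (m + 2 + α + c * (m + 2)) * derivative (quasiL α c (m + 2)) =
      C c * ((X - C (discNode α c (m + 2))) * L (α + 1) (m + 1)) +
        quasiL α c (m + 2) * C (c * (m + 2)) := by
  have quasi := C_mul_quasiL α c m
  have node : C c * C (discNode α c (m + 2)) =
      C ((m + 2) * c ^ 2 + (2 * (m + 2) + α) * c + (m + 2) + α) := by
    rw [← C_mul, discNode, mul_div_cancel₀ _ hc]
    push_cast
    rfl
  have deriv : derivative (quasiL α c (m + 2)) = -L (α + 1) (m + 1) - C c * L (α + 1) m := by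
    rw [quasiL_succ, derivative_add, derivative_C_mul, derivative_L_succ,
      derivative_L_succ]
    ring
  rw [deriv]
  simp only [map_add, map_neg, map_mul, map_pow, map_natCast, map_ofNat] at quasi node ⊢
  linear_combination L (α + 1) (m + 1) * node - C c * quasi

lemma resultant_quasiL_L (α c : ℂ) (m : ℕ) :
    (quasiL α c (m + 2)).resultant (L (α + 1) (m + 1)) (m + 2) (m + 1) =
      (-1) ^ (m + 2).choose 2 * (m + 2 + α + c * (m + 2)) ^ (m + 1) *
        (∏ k ∈ Finset.Icc 1 (m + 1), (k + α) ^ (k - 1)) *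
        (∏ k ∈ Finset.Icc 1 (m + 2), (k : ℂ) ^ ((k : ℤ) - 2 * (m + 2 : ℕ) + 3)) /
        ((m + 2).factorial : ℂ) ^ 2 := by
  have ne_zero : (m + 2 : ℂ) ≠ 0 := by exact_mod_cast (m + 1).succ_ne_zero
  have reduced := resultant_mul_L_add_L_mul (α + 1) (-(m + 2 + α + c * (m + 2))) m
    (l := C (m + 2 + α + c * (m + 2)) - X) (by compute_degree)
  rw [← C_mul_quasiL, resultant_C_mul_left, resultant_L_succ_L] at reduced
  have shift_weights : ∏ k ∈ Finset.Icc 1 (m + 1), (k + α) ^ (k - 1) =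
      ∏ k ∈ Finset.Icc 1 m, (k + (α + 1)) ^ k := by
    rw [← Finset.Ico_add_one_right_eq_Icc, ← Finset.Ico_add_one_right_eq_Icc,
      Finset.prod_eq_prod_Ico_succ_bot (by lia), ← Finset.prod_Ico_add', Nat.sub_self, pow_zero,
      one_mul]
    refine Finset.prod_congr rfl fun k _ ↦ ?_
    rw [Nat.add_sub_cancel, Nat.cast_add_one, add_right_comm, add_assoc]
  have top_power : ((m + 2 : ℕ) : ℂ) ^ (((m + 2 : ℕ) : ℤ) - 2 * m - 1) =
      (m + 2) ^ 2 / (m + 2) ^ (m + 1) := by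
    rw [show ((m + 2 : ℕ) : ℤ) - 2 * m - 1 = (2 : ℕ) - (m + 1 : ℕ) by lia,
      zpow_sub₀ (mod_cast ne_zero), zpow_natCast, zpow_natCast, Nat.cast_add, Nat.cast_ofNat]
  have exponent_eq (k : ℕ) : (k : ℤ) - 2 * (m + 2 : ℕ) + 3 = (k : ℤ) - 2 * m - 1 := by lia
  simp only [exponent_eq]
  apply mul_left_cancel₀ (pow_ne_zero (m + 1) ne_zero)
  rw [reduced, Finset.prod_Icc_succ_top (show 1 ≤ m + 1 + 1 by lia), top_power, shift_weights,
    Nat.factorial_succ (m + 1), Nat.choose_succ_succ' (m + 1), Nat.choose_one_right, neg_pow]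
  generalize ∏ k ∈ Finset.Icc 1 (m + 1), (k : ℂ) ^ ((k : ℤ) - 2 * m - 1) = powers
  have cast_top : ((m + 1 + 1 : ℕ) : ℂ) = m + 2 := by
    push_cast
    ring
  rw [Nat.cast_mul, cast_top]
  field_simp
  ring

lemma resultant_derivative_quasiL (α : ℂ) {c : ℂ} (hc : c ≠ 0) (m : ℕ) :
    (m + 2 + α + c * (m + 2)) ^ (m + 2) *
        (quasiL α c (m + 2)).resultant (derivative (quasiL α c (m + 2))) (m + 2) (m + 2) =
      (-c) ^ (m + 2) * (quasiL α c (m + 2)).eval (discNode α c (m + 2)) *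
        (quasiL α c (m + 2)).resultant (L (α + 1) (m + 1)) (m + 2) (m + 1) := by
  have degree_le := (natDegree_quasiL α c (m + 1)).le
  have node_factor := resultant_mul_right (quasiL α c (m + 2)) (X - C (discNode α c (m + 2)))
    (L (α + 1) (m + 1)) (m + 2) degree_le
  rw [natDegree_X_sub_C, natDegree_L, resultant_X_sub_C_right _ _ _ degree_le, add_comm 1]
    at node_factor
  rw [← resultant_C_mul_right, C_mul_derivative_quasiL α hc,
    resultant_add_mul_right _ _ _ _ _ (by rw [natDegree_C, zero_add]) degree_le,
    resultant_C_mul_right, node_factor, neg_pow c]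
  ring

theorem stmt_16_general (α : ℂ) (n : ℕ) (hn : 2 ≤ n) (c : ℂ) (hc : c ≠ 0)
    (hden : (n : ℂ) + α + c * n ≠ 0) :
    disc (L α n + C c * L α (n - 1)) =
      1 / ((n : ℂ) + α + c * n) *
        (∏ k ∈ Finset.Icc 1 n, (k : ℂ) ^ ((k : ℤ) - 2 * n + 3)) *
        (∏ k ∈ Finset.Icc 1 (n - 1), ((k : ℂ) + α) ^ (k - 1)) *
        (-c) ^ n *
        (L α n + C c * L α (n - 1)).eval
          (((n : ℂ) * c ^ 2 + (2 * n + α) * c + n + α) / c) := by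
  obtain ⟨m, rfl⟩ := Nat.exists_eq_add_of_le' hn
  change disc (quasiL α c (m + 2)) =
    _ * (∏ k ∈ Finset.Icc 1 (m + 1), _) * _ *
      eval (discNode α c (m + 2)) (quasiL α c (m + 2))
  have degree_eq := natDegree_quasiL α c (m + 1)
  have elimination := resultant_derivative_quasiL α hc m
  rw [resultant_quasiL_L] at elimination
  rw [disc_eq_resultant (by lia), leadingCoeff_quasiL_sq, degree_eq]
  have factorial_ne_zero : ((m + 2).factorial : ℂ) ≠ 0 := mod_cast (m + 2).factorial_ne_zero
  rw [Nat.cast_add, Nat.cast_ofNat] at hden ⊢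
  generalize (m + 2 + α + c * (m + 2) : ℂ) = d at hden elimination ⊢
  field_simp at elimination ⊢
  apply mul_left_cancel₀ (pow_ne_zero (m + 1) hden)
  obtain sign | sign := neg_one_pow_eq_or ℂ ((m + 2).choose 2) <;> rw [sign] at elimination ⊢
  · linear_combination elimination
  · linear_combination -elimination

theorem stmt_16 (α : ℝ) (hα : -1 < α) (n : ℕ) (hn : 2 ≤ n) (c : ℂ) (hc : c ≠ 0)
    (hden : (n : ℂ) + α + c * n ≠ 0) :
    disc (L α n + C c * L α (n - 1)) =
      1 / ((n : ℂ) + α + c * n) *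
        (∏ k ∈ Finset.Icc 1 n, (k : ℂ) ^ ((k : ℤ) - 2 * n + 3)) *
        (∏ k ∈ Finset.Icc 1 (n - 1), ((k : ℂ) + α) ^ (k - 1)) *
        (-c) ^ n *
        (L α n + C c * L α (n - 1)).eval
          (((n : ℂ) * c ^ 2 + (2 * n + α) * c + n + α) / c) :=
  stmt_16_general α n hn c hc hden
end

section
/- If r ≡ 2, 3, 4, 5, or 6 (mod 8), then there do not exist rationals x₁,…,x_{r+1}, y₁,…,y_{r+1} satisfying Σ_{i=1}^{r+1} x_i y_i^k = a_k for all 0 ≤ k ≤ 2r, where a_{2j} = (2j)!/(2^{2j} j!) and a_{2j+1} = 0. -/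
/-- The moments of the normalized Gaussian measure `e^{-t²}dt/√π`:
`a (2k) = (2k)! / (2^{2k} k!)` and `a (2k+1) = 0`. -/
def gaussMoment (j : ℕ) : ℚ :=
  if Even j then (j.factorial : ℚ) / (2 ^ j * ((j / 2).factorial : ℚ)) else 0

/-!
By orthogonality, the node polynomial of an `(r + 1)`-point quadrature formula of degree `2r` is
`H (r + 1) + c H r` with `H n` the monic Hermite polynomials of variance `1/2`. Let `ρ = √2`, the
square root of the 2-adic norm of the variance. Every nonzero 2-adic number has norm a power of
`2`, never `ρ`, so a product of linear factors `X - a` over `ℚ₂` has exactly one term `b Xʲ`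
maximizing `‖b‖ ρʲ`. On the other hand, `H n` with `n ≥ 2` attains its maximum `ρⁿ` both at the
leading term and at the term of degree `0` or `1`, and as `‖c‖ ≠ ρ`, one of the two summands
strictly dominates the other and passes this tie on to `H (r + 1) + c H r`.
-/

open Polynomial

section DominantTerm

variable {K : Type*} [NormedField K] {ρ M : ℝ} {f g : K[X]} {k l : ℕ}

/-- The norm of the degree `j` term of `f` at radius `ρ`; the supremum over `j` is the Gauss
norm of `f` of radius `ρ`. -/
def termNorm (ρ : ℝ) (f : K[X]) (j : ℕ) : ℝ :=
  ‖f.coeff j‖ * ρ ^ j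

/-- The degree `k` term of `f` is strictly larger at radius `ρ` than each of the others. In terms
of the Newton polygon: no edge has the slope belonging to roots of norm `ρ`. -/
def IsDominantDegree (ρ : ℝ) (f : K[X]) (k : ℕ) : Prop :=
  ∀ j ≠ k, termNorm ρ f j < termNorm ρ f k

theorem termNorm_nonneg (hρ : 0 ≤ ρ) (f : K[X]) (j : ℕ) : 0 ≤ termNorm ρ f j := by
  unfold termNorm; positivity

theorem termNorm_C_mul (ρ : ℝ) (a : K) (f : K[X]) (j : ℕ) :
    termNorm ρ (C a * f) j = ‖a‖ * termNorm ρ f j := by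
  simp [termNorm, mul_assoc]

theorem termNorm_X_mul_zero (ρ : ℝ) (f : K[X]) : termNorm ρ (X * f) 0 = 0 := by
  simp [termNorm]

theorem termNorm_X_mul_succ (ρ : ℝ) (f : K[X]) (j : ℕ) :
    termNorm ρ (X * f) (j + 1) = ρ * termNorm ρ f j := by
  simp only [termNorm, coeff_X_mul]; ring

theorem termNorm_mul_termNorm (ρ : ℝ) (f g : K[X]) (i j : ℕ) :
    termNorm ρ f i * termNorm ρ g j = ‖f.coeff i * g.coeff j‖ * ρ ^ (i + j) := by
  rw [norm_mul, termNorm, termNorm]; ring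

theorem IsDominantDegree.le (hf : IsDominantDegree ρ f k) (j : ℕ) :
    termNorm ρ f j ≤ termNorm ρ f k := by
  rcases eq_or_ne j k with rfl | hj
  exacts [le_rfl, (hf j hj).le]

theorem IsDominantDegree.pos (hρ : 0 ≤ ρ) (hf : IsDominantDegree ρ f k) : 0 < termNorm ρ f k :=
  (termNorm_nonneg hρ f (k + 1)).trans_lt (hf _ k.succ_ne_self)

theorem IsDominantDegree.mul_termNorm_lt (hρ : 0 ≤ ρ) (hf : IsDominantDegree ρ f k)
    (hg : IsDominantDegree ρ g l) {i j : ℕ} (hij : (i, j) ≠ (k, l)) :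
    termNorm ρ f i * termNorm ρ g j < termNorm ρ f k * termNorm ρ g l := by
  by_cases hi : i = k
  · have hj : j ≠ l := fun hj => hij (by rw [hi, hj])
    exact mul_lt_mul_of_le_of_lt_of_nonneg_of_pos (hf.le i) (hg j hj)
      (termNorm_nonneg hρ g j) (hf.pos hρ)
  · exact mul_lt_mul_of_lt_of_le_of_nonneg_of_pos (hf i hi) (hg.le j)
      (termNorm_nonneg hρ f i) (hg.pos hρ)

theorem isDominantDegree_one (ρ : ℝ) : IsDominantDegree ρ (1 : K[X]) 0 := by
  intro j hj
  simp [termNorm, coeff_one, hj]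

theorem isDominantDegree_X_sub_C_of_lt {a : K} (ha : ‖a‖ < ρ) :
    IsDominantDegree ρ (X - C a) 1 := by
  rintro (_ | _ | j) hj
  · simpa [termNorm] using ha
  · contradiction
  · simpa [termNorm, coeff_X, coeff_C] using (norm_nonneg a).trans_lt ha

theorem isDominantDegree_X_sub_C_of_gt {a : K} (hρ : 0 ≤ ρ) (ha : ρ < ‖a‖) :
    IsDominantDegree ρ (X - C a) 0 := by
  rintro (_ | _ | j) hj
  · contradiction
  · simpa [termNorm, coeff_C] using ha
  · simpa [termNorm, coeff_X, coeff_C] using norm_pos_iff.1 (hρ.trans_lt ha)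

section Ultrametric

variable [IsUltrametricDist K]

theorem termNorm_add_le (hρ : 0 ≤ ρ) (f g : K[X]) (j : ℕ) :
    termNorm ρ (f + g) j ≤ max (termNorm ρ f j) (termNorm ρ g j) := by
  rw [termNorm, termNorm, termNorm, ← max_mul_of_nonneg _ _ (pow_nonneg hρ j), coeff_add]
  gcongr
  exact IsUltrametricDist.norm_add_le_max _ _

theorem termNorm_add_eq_left (hρ : 0 ≤ ρ) {j : ℕ} (h : termNorm ρ g j < termNorm ρ f j) :
    termNorm ρ (f + g) j = termNorm ρ f j := by
  have hcoeff : ‖g.coeff j‖ < ‖f.coeff j‖ := lt_of_mul_lt_mul_right h (pow_nonneg hρ j)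
  rw [termNorm, termNorm, coeff_add,
    IsUltrametricDist.norm_add_eq_max_of_norm_ne_norm hcoeff.ne', max_eq_left hcoeff.le]

theorem IsDominantDegree.termNorm_mul (hρ : 0 ≤ ρ) (hf : IsDominantDegree ρ f k)
    (hg : IsDominantDegree ρ g l) :
    termNorm ρ (f * g) (k + l) = termNorm ρ f k * termNorm ρ g l := by
  rw [termNorm_mul_termNorm, termNorm, coeff_mul]
  congr 1
  refine IsUltrametricDist.isNonarchimedean_norm.apply_sum_eq_of_lt (k := (k, l))
    (fun a => (norm_neg a).symm) (by simp) fun p hp hne => ?_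
  refine lt_of_mul_lt_mul_right ?_ (pow_nonneg hρ (k + l))
  rw [← termNorm_mul_termNorm ρ f g k l, ← Finset.HasAntidiagonal.mem_antidiagonal.1 hp,
    ← termNorm_mul_termNorm]
  exact hf.mul_termNorm_lt hρ hg hne

theorem IsDominantDegree.mul (hρ : 0 ≤ ρ) (hf : IsDominantDegree ρ f k)
    (hg : IsDominantDegree ρ g l) : IsDominantDegree ρ (f * g) (k + l) := by
  intro n hn
  obtain ⟨p, hp, hle⟩ := IsUltrametricDist.exists_norm_finsetSum_le_of_nonempty
    ⟨(0, n), Finset.HasAntidiagonal.mem_antidiagonal.2 (zero_add n)⟩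
    (fun p : ℕ × ℕ => f.coeff p.1 * g.coeff p.2)
  rw [Finset.HasAntidiagonal.mem_antidiagonal] at hp
  calc termNorm ρ (f * g) n ≤ ‖f.coeff p.1 * g.coeff p.2‖ * ρ ^ n := by
        rw [termNorm, coeff_mul]; gcongr
    _ = termNorm ρ f p.1 * termNorm ρ g p.2 := by rw [termNorm_mul_termNorm, hp]
    _ < termNorm ρ f k * termNorm ρ g l :=
        hf.mul_termNorm_lt hρ hg fun h => hn (by simp_all)
    _ = termNorm ρ (f * g) (k + l) := (hf.termNorm_mul hρ hg).symm

theorem exists_isDominantDegree_nodal {ι : Type*} (hρ : 0 ≤ ρ) (hK : ∀ a : K, ‖a‖ ≠ ρ)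
    (s : Finset ι) (y : ι → K) : ∃ k, IsDominantDegree ρ (Lagrange.nodal s y) k := by
  classical
  induction s using Finset.induction_on with
  | empty => exact ⟨0, isDominantDegree_one ρ⟩
  | insert i s hi ih =>
    obtain ⟨k, hk⟩ := ih
    rw [Lagrange.nodal_insert_eq_nodal hi]
    rcases (hK (y i)).lt_or_gt with hlt | hgt
    · exact ⟨_, (isDominantDegree_X_sub_C_of_lt hlt).mul hρ hk⟩
    · exact ⟨_, (isDominantDegree_X_sub_C_of_gt hρ hgt).mul hρ hk⟩

theorem not_isDominantDegree_add {i j : ℕ} (hρ : 0 ≤ ρ) (hij : i ≠ j)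
    (hf : ∀ n, termNorm ρ f n ≤ M) (hi : termNorm ρ f i = M) (hj : termNorm ρ f j = M)
    (hg : ∀ n, termNorm ρ g n < M) (k : ℕ) : ¬ IsDominantDegree ρ (f + g) k := by
  intro hk
  have hmax (n : ℕ) (hn : termNorm ρ f n = M) : n = k := by
    by_contra hne
    have hsum : termNorm ρ (f + g) n = M := by
      rw [termNorm_add_eq_left hρ (by rw [hn]; exact hg n), hn]
    refine (hk n hne).not_ge ?_
    rw [hsum]
    exact (termNorm_add_le hρ f g k).trans (max_le (hf k) (hg k).le)
  exact hij ((hmax i hi).trans (hmax j hj).symm)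

theorem mul_termNorm_derivative_le (hρ : 0 ≤ ρ) (f : K[X]) (j : ℕ) :
    ρ * termNorm ρ (derivative f) j ≤ termNorm ρ f (j + 1) := by
  have hj : ‖((j : K) + 1)‖ ≤ 1 := mod_cast IsUltrametricDist.norm_natCast_le_one K (j + 1)
  calc ρ * termNorm ρ (derivative f) j
      = ‖((j : K) + 1)‖ * termNorm ρ f (j + 1) := by
        rw [termNorm, termNorm, coeff_derivative, norm_mul]; ring
    _ ≤ termNorm ρ f (j + 1) := mul_le_of_le_one_left (termNorm_nonneg hρ f _) hj

end Ultrametric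

end DominantTerm

section Hermite

variable {R : Type*} [CommRing R]

/-- The monic Hermite polynomials orthogonal for the centred Gaussian of variance `σ`. Variance
`1` gives `Polynomial.hermite`. -/
noncomputable def gaussHermite (σ : R) : ℕ → R[X]
  | 0 => 1
  | n + 1 => X * gaussHermite σ n - C σ * derivative (gaussHermite σ n)

theorem coeff_zero_gaussHermite_succ (σ : R) (n : ℕ) :
    (gaussHermite σ (n + 1)).coeff 0 = -(σ * (gaussHermite σ n).coeff 1) := by
  simp [gaussHermite, coeff_derivative]

theorem coeff_one_gaussHermite_succ (σ : R) (n : ℕ) :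
    (gaussHermite σ (n + 1)).coeff 1 =
      (gaussHermite σ n).coeff 0 - 2 * σ * (gaussHermite σ n).coeff 2 := by
  simp only [gaussHermite, coeff_sub, coeff_X_mul, coeff_C_mul, coeff_derivative]
  norm_num
  ring

theorem natDegree_gaussHermite_le (σ : R) (n : ℕ) : (gaussHermite σ n).natDegree ≤ n := by
  induction n with
  | zero => simp [gaussHermite]
  | succ n ih =>
    have hX : (X * gaussHermite σ n).natDegree ≤ n + 1 :=
      (natDegree_mul_le_of_le natDegree_X_le ih).trans_eq (add_comm 1 n)
    have hderiv : (C σ * derivative (gaussHermite σ n)).natDegree ≤ n + 1 :=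
      (natDegree_C_mul_le _ _).trans ((natDegree_derivative_le _).trans (by lia))
    exact natDegree_sub_le_of_le hX hderiv |>.trans_eq (max_self _)

theorem coeff_gaussHermite_of_lt (σ : R) {n k : ℕ} (h : n < k) : (gaussHermite σ n).coeff k = 0 :=
  coeff_eq_zero_of_natDegree_lt ((natDegree_gaussHermite_le σ n).trans_lt h)

theorem coeff_gaussHermite_self (σ : R) (n : ℕ) : (gaussHermite σ n).coeff n = 1 := by
  induction n with
  | zero => simp [gaussHermite]
  | succ n ih => simp [gaussHermite, coeff_derivative, ih, coeff_gaussHermite_of_lt]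

end Hermite

section HermiteNorm

variable {K : Type*} [NormedField K] {σ : K} {ρ : ℝ}

theorem termNorm_gaussHermite_self (σ : K) (ρ : ℝ) (n : ℕ) :
    termNorm ρ (gaussHermite σ n) n = ρ ^ n := by
  simp [termNorm, coeff_gaussHermite_self]

variable [IsUltrametricDist K]

theorem termNorm_gaussHermite_le (hρ : 0 ≤ ρ) (hσ : ‖σ‖ = ρ ^ 2) (n j : ℕ) :
    termNorm ρ (gaussHermite σ n) j ≤ ρ ^ n := by
  induction n generalizing j with
  | zero => rcases j with _ | j <;> simp [termNorm, gaussHermite, coeff_one]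
  | succ n ih =>
    have hX : termNorm ρ (X * gaussHermite σ n) j ≤ ρ ^ (n + 1) := by
      rcases j with _ | j
      · rw [termNorm_X_mul_zero]; positivity
      · rw [termNorm_X_mul_succ, pow_succ']; gcongr; exact ih j
    have hderiv : termNorm ρ (C (-σ) * derivative (gaussHermite σ n)) j ≤ ρ ^ (n + 1) := by
      rw [termNorm_C_mul, norm_neg, hσ, sq, mul_assoc, pow_succ']
      gcongr
      exact (mul_termNorm_derivative_le hρ _ j).trans (ih _)
    rw [gaussHermite, sub_eq_add_neg, ← neg_mul, ← C_neg]
    exact (termNorm_add_le hρ _ _ j).trans (max_le hX hderiv)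

theorem termNorm_gaussHermite_mod_two (h2 : ‖(2 : K)‖ < 1) (hρ : 0 < ρ) (hσ : ‖σ‖ = ρ ^ 2)
    (n : ℕ) : termNorm ρ (gaussHermite σ n) (n % 2) = ρ ^ n := by
  induction n with
  | zero => simp [termNorm, gaussHermite]
  | succ n ih =>
    rcases Nat.mod_two_eq_zero_or_one n with hn | hn
    · have hsmall : ‖2 * σ * (gaussHermite σ n).coeff 2‖ < ‖(gaussHermite σ n).coeff 0‖ :=
        calc ‖2 * σ * (gaussHermite σ n).coeff 2‖
            = ‖(2 : K)‖ * termNorm ρ (gaussHermite σ n) 2 := by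
              rw [norm_mul, norm_mul, hσ, termNorm]; ring
          _ ≤ ‖(2 : K)‖ * ρ ^ n := by gcongr; exact termNorm_gaussHermite_le hρ.le hσ n 2
          _ < ρ ^ n := mul_lt_of_lt_one_left (by positivity) h2
          _ = ‖(gaussHermite σ n).coeff 0‖ := by rw [← ih, hn]; simp [termNorm]
      rw [Nat.succ_mod_two_eq_one_iff.2 hn, termNorm, coeff_one_gaussHermite_succ, sub_eq_add_neg,
        IsUltrametricDist.norm_add_eq_max_of_norm_ne_norm (by rw [norm_neg]; exact hsmall.ne'),
        norm_neg, max_eq_left hsmall.le, pow_succ ρ n, ← ih, hn]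
      simp [termNorm]
    · rw [Nat.succ_mod_two_eq_zero_iff.2 hn, termNorm, coeff_zero_gaussHermite_succ, norm_neg,
        norm_mul, hσ, pow_succ ρ n, ← ih, hn, termNorm]
      ring

theorem not_isDominantDegree_gaussHermite_add (h2 : ‖(2 : K)‖ < 1) (hρ : 0 < ρ)
    (hσ : ‖σ‖ = ρ ^ 2) {c : K} (hc : ‖c‖ ≠ ρ) {r : ℕ} (hr : 2 ≤ r) (k : ℕ) :
    ¬ IsDominantDegree ρ (gaussHermite σ (r + 1) + C c * gaussHermite σ r) k := by
  have hle := termNorm_gaussHermite_le hρ.le hσ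
  have hbot := termNorm_gaussHermite_mod_two h2 hρ hσ
  have htop := termNorm_gaussHermite_self σ ρ
  rcases hc.lt_or_gt with hlt | hgt
  · refine not_isDominantDegree_add (i := r + 1) (j := (r + 1) % 2) hρ.le (by lia)
      (hle _) (htop _) (hbot _) (fun n => ?_) k
    calc termNorm ρ (C c * gaussHermite σ r) n ≤ ‖c‖ * ρ ^ r := by
          rw [termNorm_C_mul]; gcongr; exact hle r n
      _ < ρ ^ (r + 1) := by rw [pow_succ']; gcongr
  · rw [add_comm]
    refine not_isDominantDegree_add (i := r) (j := r % 2) (M := ‖c‖ * ρ ^ r) hρ.le (by lia)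
      (fun n => ?_) ?_ ?_ (fun n => ?_) k
    · rw [termNorm_C_mul]; gcongr; exact hle r n
    · rw [termNorm_C_mul, htop]
    · rw [termNorm_C_mul, hbot]
    · calc termNorm ρ (gaussHermite σ (r + 1)) n ≤ ρ ^ (r + 1) := hle _ n
        _ < ‖c‖ * ρ ^ r := by rw [pow_succ']; gcongr

end HermiteNorm

section GaussianFunctional

variable {R : Type*} [CommRing R] {σ : R} {L : R[X] →ₗ[R] R}

/-- `L` is integration of polynomials against the centred Gaussian probability measure of variance
`σ`. It is characterized by normalization and Stein's identity, which make sense over any ring. -/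
structure IsGaussianFunctional (σ : R) (L : R[X] →ₗ[R] R) : Prop where
  map_one : L 1 = 1
  map_X_mul (p : R[X]) : L (X * p) = σ * L (derivative p)

namespace IsGaussianFunctional

theorem map_gaussHermite_succ_mul (hL : IsGaussianFunctional σ L) (n : ℕ) (p : R[X]) :
    L (gaussHermite σ (n + 1) * p) = σ * L (gaussHermite σ n * derivative p) := by
  have hsplit : gaussHermite σ (n + 1) * p =
      X * (gaussHermite σ n * p) - σ • (derivative (gaussHermite σ n) * p) := by
    rw [gaussHermite, smul_eq_C_mul]; ring
  rw [hsplit, map_sub, hL.map_X_mul, derivative_mul, map_add, map_smul, smul_eq_mul]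
  ring

theorem map_gaussHermite_mul (hL : IsGaussianFunctional σ L) {n : ℕ} {p : R[X]}
    (hp : p.natDegree ≤ n) : L (gaussHermite σ n * p) = σ ^ n * n.factorial * p.coeff n := by
  induction n generalizing p with
  | zero =>
    obtain ⟨a, rfl⟩ : ∃ a, p = C a := ⟨_, eq_C_of_natDegree_le_zero hp⟩
    rw [gaussHermite, one_mul, ← mul_one (C a), ← smul_eq_C_mul, map_smul, hL.map_one]
    simp
  | succ n ih =>
    rw [hL.map_gaussHermite_succ_mul, ih (by have := natDegree_derivative_le p; lia),
      coeff_derivative, Nat.factorial_succ]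
    push_cast; ring

theorem map_gaussHermite_mul_of_lt (hL : IsGaussianFunctional σ L) {n : ℕ} {p : R[X]}
    (hp : p.natDegree < n) : L (gaussHermite σ n * p) = 0 := by
  rw [hL.map_gaussHermite_mul hp.le, coeff_eq_zero_of_natDegree_lt hp, mul_zero]

variable [IsDomain R] [CharZero R]

theorem eq_zero_of_orthogonal (hL : IsGaussianFunctional σ L) (hσ : σ ≠ 0) {p : R[X]} {r : ℕ}
    (hp : p.degree < r) (horth : ∀ n < r, L (gaussHermite σ n * p) = 0) : p = 0 := by
  by_contra hne
  have hlead := horth p.natDegree ((natDegree_lt_iff_degree_lt hne).2 hp)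
  rw [hL.map_gaussHermite_mul le_rfl] at hlead
  exact mul_ne_zero (mul_ne_zero (pow_ne_zero _ hσ) (mod_cast p.natDegree.factorial_ne_zero))
    (leadingCoeff_ne_zero.2 hne) hlead

theorem eq_gaussHermite_add_of_orthogonal (hL : IsGaussianFunctional σ L) (hσ : σ ≠ 0) {W : R[X]}
    (hW : W.Monic) {r : ℕ} (hdeg : W.natDegree = r + 1)
    (horth : ∀ n < r, L (gaussHermite σ n * W) = 0) :
    ∃ c, W = gaussHermite σ (r + 1) + C c * gaussHermite σ r := by
  set c := W.coeff r - (gaussHermite σ (r + 1)).coeff r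
  refine ⟨c, sub_eq_zero.1 (hL.eq_zero_of_orthogonal (r := r) hσ ?_ fun n hn => ?_)⟩
  · refine (degree_lt_iff_coeff_zero _ _).2 fun j hj => ?_
    have htop : W.coeff (r + 1) = 1 := by rw [← hdeg]; exact hW
    rcases (by lia : j = r ∨ j = r + 1 ∨ r + 1 < j) with rfl | rfl | hj
    · rw [coeff_sub, coeff_add, coeff_C_mul, coeff_gaussHermite_self]; ring
    · simp [htop, coeff_gaussHermite_self, coeff_gaussHermite_of_lt]
    · simp [coeff_eq_zero_of_natDegree_lt (hdeg ▸ hj), coeff_gaussHermite_of_lt, hj,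
        (Nat.lt_succ_self r).trans hj]
  · have hHermite {m : ℕ} (hm : n < m) : L (gaussHermite σ m * gaussHermite σ n) = 0 :=
      hL.map_gaussHermite_mul_of_lt ((natDegree_gaussHermite_le σ n).trans_lt hm)
    have hsplit : gaussHermite σ n * (W - (gaussHermite σ (r + 1) + C c * gaussHermite σ r)) =
        gaussHermite σ n * W - gaussHermite σ (r + 1) * gaussHermite σ n -
          c • (gaussHermite σ r * gaussHermite σ n) := by
      rw [smul_eq_C_mul]; ring
    rw [hsplit, map_sub, map_sub, map_smul, horth n hn, hHermite (by lia), hHermite hn]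
    simp

end IsGaussianFunctional

end GaussianFunctional

section Quadrature

theorem map_eq_sum_mul_eval {R ι : Type*} [CommSemiring R] [Fintype ι] {L : R[X] →ₗ[R] R} {N : ℕ}
    {x y : ι → R} (hquad : ∀ k ≤ N, ∑ i, x i * y i ^ k = L (X ^ k)) {p : R[X]}
    (hp : p.natDegree ≤ N) : L p = ∑ i, x i * p.eval (y i) := by
  have hp' : p.natDegree < N + 1 := Nat.lt_succ_of_le hp
  calc L p = ∑ k ∈ Finset.range (N + 1), p.coeff k * L (X ^ k) := by
        conv_lhs => rw [p.as_sum_range_C_mul_X_pow' hp']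
        simp only [map_sum, ← smul_eq_C_mul, map_smul, smul_eq_mul]
    _ = ∑ k ∈ Finset.range (N + 1), ∑ i, x i * (p.coeff k * y i ^ k) := by
        refine Finset.sum_congr rfl fun k hk => ?_
        rw [← hquad k (Nat.lt_succ_iff.1 (Finset.mem_range.1 hk)), Finset.mul_sum]
        exact Finset.sum_congr rfl fun i _ => mul_left_comm _ _ _
    _ = ∑ i, x i * p.eval (y i) := by
        rw [Finset.sum_comm]
        simp only [eval_eq_sum_range' hp', Finset.mul_sum]

theorem map_mul_nodal_eq_zero {R ι : Type*} [CommRing R] [Nontrivial R] [Fintype ι]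
    {L : R[X] →ₗ[R] R} {N : ℕ} {x y : ι → R}
    (hquad : ∀ k ≤ N, ∑ i, x i * y i ^ k = L (X ^ k)) {p : R[X]}
    (hp : p.natDegree + Fintype.card ι ≤ N) : L (p * Lagrange.nodal Finset.univ y) = 0 := by
  rw [map_eq_sum_mul_eval hquad (natDegree_mul_le.trans (by
    rwa [Lagrange.natDegree_nodal, Finset.card_univ]))]
  simp [Lagrange.eval_nodal_at_node]

theorem IsGaussianFunctional.not_quadrature {K : Type*} [NormedField K] [IsUltrametricDist K]
    [CharZero K] (h2 : ‖(2 : K)‖ < 1) {σ : K} (hσ : ∀ a : K, ‖a‖ ^ 2 ≠ ‖σ‖) {L : K[X] →ₗ[K] K}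
    (hL : IsGaussianFunctional σ L) {ι : Type*} [Fintype ι] {r : ℕ}
    (hcard : Fintype.card ι = r + 1) (hr : 2 ≤ r) (x y : ι → K) :
    ¬ ∀ k ≤ 2 * r, ∑ i, x i * y i ^ k = L (X ^ k) := by
  intro hquad
  have hσ0 : σ ≠ 0 := by rintro rfl; exact hσ 0 (by simp)
  obtain ⟨c, hc⟩ := hL.eq_gaussHermite_add_of_orthogonal hσ0
    (Lagrange.nodal_monic (s := Finset.univ) (v := y)) (r := r)
    (by rw [Lagrange.natDegree_nodal, Finset.card_univ, hcard])
    fun n hn => map_mul_nodal_eq_zero hquad (by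
      have := natDegree_gaussHermite_le σ n
      lia)
  have hρ : 0 < √‖σ‖ := Real.sqrt_pos.2 (norm_pos_iff.2 hσ0)
  have hK (a : K) : ‖a‖ ≠ √‖σ‖ := fun h => hσ a (by rw [h, Real.sq_sqrt (norm_nonneg σ)])
  obtain ⟨k, hk⟩ := exists_isDominantDegree_nodal hρ.le hK Finset.univ y
  rw [hc] at hk
  exact not_isDominantDegree_gaussHermite_add h2 hρ (Real.sq_sqrt (norm_nonneg σ)).symm (hK c) hr k
    hk

end Quadrature

section GaussMoment

theorem gaussMoment_zero : gaussMoment 0 = 1 := by simp [gaussMoment]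

theorem gaussMoment_one : gaussMoment 1 = 0 := by simp [gaussMoment]

theorem gaussMoment_add_two (k : ℕ) : gaussMoment (k + 2) = (k + 1) / 2 * gaussMoment k := by
  rcases Nat.even_or_odd k with ⟨m, rfl⟩ | hodd
  · have hm : (m.factorial : ℚ) ≠ 0 := mod_cast m.factorial_ne_zero
    rw [gaussMoment, gaussMoment, if_pos (by simp [Nat.even_add]), if_pos (by simp),
      show (m + m + 2) / 2 = m + 1 by lia, show (m + m) / 2 = m by lia]
    simp only [Nat.factorial_succ]
    push_cast
    field_simp
    ring
  · have heven : ¬ Even k := Nat.not_even_iff_odd.2 hodd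
    rw [gaussMoment, gaussMoment, if_neg (by simpa [Nat.even_add] using heven), if_neg heven,
      mul_zero]

/-- Integration of polynomials against `e^{-t²}dt/√π`, with coefficients in `K`: the linear map
sending `X ^ k` to the `k`-th moment. -/
noncomputable def gaussFunctional (K : Type*) [Field K] : K[X] →ₗ[K] K :=
  lsum fun k => (gaussMoment k : K) • LinearMap.id

variable {K : Type*} [Field K]

theorem gaussFunctional_monomial (k : ℕ) (a : K) :
    gaussFunctional K (monomial k a) = gaussMoment k * a := by
  simp [gaussFunctional]

theorem isGaussianFunctional_gaussFunctional [CharZero K] :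
    IsGaussianFunctional (1 / 2) (gaussFunctional K) where
  map_one := by
    rw [← monomial_zero_one, gaussFunctional_monomial, gaussMoment_zero]; simp
  map_X_mul p := by
    induction p using Polynomial.induction_on' with
    | add p q hp hq => rw [mul_add, map_add, derivative_add, map_add, hp, hq, mul_add]
    | monomial k a =>
      rw [X_mul_monomial, derivative_monomial, gaussFunctional_monomial, gaussFunctional_monomial]
      rcases k with _ | k
      · simp [gaussMoment_one]
      · rw [gaussMoment_add_two, Nat.add_sub_cancel]; push_cast; ring

end GaussMoment

theorem padic_two_norm_sq_ne_norm_one_half (a : ℚ_[2]) : ‖a‖ ^ 2 ≠ ‖(1 / 2 : ℚ_[2])‖ := by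
  have hhalf : ‖(1 / 2 : ℚ_[2])‖ = (2 : ℝ) ^ (1 : ℤ) := by
    have htwo : ‖(2 : ℚ_[2])‖ = (2 : ℝ)⁻¹ := mod_cast Padic.norm_p (p := 2)
    rw [norm_div, norm_one, htwo]; norm_num
  rw [hhalf]
  rcases eq_or_ne a 0 with rfl | ha
  · simp
  · rw [Padic.norm_eq_zpow_neg_valuation ha, Nat.cast_ofNat, ← zpow_natCast, ← zpow_mul]
    refine (zpow_right_injective₀ two_pos (by norm_num)).ne ?_
    push_cast
    lia

theorem stmt_19_general (r : ℕ) (hr : 2 ≤ r) :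
    ¬ ∃ (x y : Fin (r + 1) → ℚ_[2]),
      ∀ k ≤ 2 * r, ∑ i, x i * y i ^ k = gaussMoment k := by
  rintro ⟨x, y, hquad⟩
  have h2 : ‖(2 : ℚ_[2])‖ < 1 := mod_cast Padic.norm_p_lt_one (p := 2)
  refine isGaussianFunctional_gaussFunctional.not_quadrature h2 padic_two_norm_sq_ne_norm_one_half
    (Fintype.card_fin _) hr x y fun k hk => ?_
  rw [hquad k hk, X_pow_eq_monomial, gaussFunctional_monomial, mul_one]

theorem stmt_19 (r : ℕ) (hr : 0 < r) (hmod : r % 8 = 2 ∨ r % 8 = 3 ∨ r % 8 = 4 ∨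
    r % 8 = 5 ∨ r % 8 = 6) :
    ¬ ∃ (x y : Fin (r + 1) → ℚ),
      ∀ k ≤ 2 * r, ∑ i, x i * y i ^ k = gaussMoment k := by
  rintro ⟨x, y, hquad⟩
  exact stmt_19_general r (by lia) ⟨(x ·), (y ·), fun k hk => by simp [← hquad k hk]⟩
end
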